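/- arXiv:1704.07155 — 3 statements merged into one kernel-verified Lean document; each statement's English description precedes it below -/
import Mathlib

section
/- Let (E,d) be a metric space, let r > 0, and let A_1, …, A_M be subsets of E, each of diameter at most r, whose union contains a given finite set X ⊆ E. Define finite sets X_0, X_1, …, X_M by X_0 = X and, for each 0 ≤ i < M: if X_i is nonempty, then X_{i+1} = X_i \ {y ∈ E : d(x_i, y) ≤ r} for some (arbitrary) point x_i ∈ X_i; if X_i is empty, then X_{i+1} = ∅. Then X_M = ∅. -/
theorem diff_setOf_edist_le_subset_iUnion_succAbove {E : Type*} [PseudoEMetricSpace E]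
    {r : ENNReal} {n : ℕ} {A : Fin (n + 1) → Set E} {X : Set E} (hcover : X ⊆ ⋃ j, A j)
    {j : Fin (n + 1)} (hdiam : Metric.ediam (A j) ≤ r) {x : E} (hx : x ∈ A j) :
    X \ {y | edist x y ≤ r} ⊆ ⋃ k, A (j.succAbove k) := by
  rintro y ⟨hyX, hy⟩
  obtain ⟨i, hyi⟩ := Set.mem_iUnion.1 (hcover hyX)
  have hij : i ≠ j := by
    rintro rfl
    exact hy ((Metric.edist_le_ediam_of_mem hx hyi).trans hdiam)
  obtain ⟨k, rfl⟩ := Fin.exists_succAbove_eq hij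
  exact Set.mem_iUnion_of_mem k hyi

theorem stmt_0_general {E : Type*} [PseudoEMetricSpace E] {r : ENNReal}
    {M : ℕ} {A : Fin M → Set E} (hdiam : ∀ j, Metric.ediam (A j) ≤ r)
    {X : ℕ → Set E} (hcover : X 0 ⊆ ⋃ j, A j)
    (hstep : ∀ i < M,
      ((X i).Nonempty → ∃ x ∈ X i, X (i + 1) = X i \ {y | edist x y ≤ r}) ∧
      (X i = ∅ → X (i + 1) = ∅)) :
    X M = ∅ := by
  induction M generalizing X with
  | zero => simpa using hcover
  | succ M ih =>
    obtain ⟨hremove, hempty⟩ := hstep 0 M.succ_pos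
    have smaller_cover :
        ∃ B : Fin M → Set E, (∀ k, Metric.ediam (B k) ≤ r) ∧ X 1 ⊆ ⋃ k, B k := by
      rcases (X 0).eq_empty_or_nonempty with hX | hX
      · exact ⟨fun _ => ∅, by simp, by simp [hempty hX]⟩
      · obtain ⟨x, hx, hX₁⟩ := hremove hX
        obtain ⟨j, hxj⟩ := Set.mem_iUnion.1 (hcover hx)
        exact ⟨fun k => A (j.succAbove k), fun k => hdiam _, hX₁.trans_subset
          (diff_setOf_edist_le_subset_iUnion_succAbove hcover (hdiam j) hxj)⟩
    obtain ⟨B, hB, hcoverB⟩ := smaller_cover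
    exact ih (X := fun i => X (i + 1)) hB hcoverB
      fun i hi => hstep (i + 1) (Nat.succ_lt_succ hi)

/-- Deterministic core of the stability proof: if a finite set `X₀` in a metric
space is covered by `M` sets each of diameter at most `r`, and at each of `M`
steps we either do nothing (if the current set is empty) or remove an arbitrary
point together with all points within distance `r` of it, then after `M` steps
the set is empty. -/
theorem stmt_0 {E : Type*} [MetricSpace E] (r : ℝ) (hr : 0 < r)
    (M : ℕ) (A : Fin M → Set E)
    (hdiam : ∀ j, EMetric.diam (A j) ≤ ENNReal.ofReal r)
    (X : ℕ → Set E) (hfin : (X 0).Finite)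
    (hcover : X 0 ⊆ ⋃ j, A j)
    (hstep : ∀ i < M,
      ((X i).Nonempty → ∃ x ∈ X i, X (i + 1) = X i \ {y | dist x y ≤ r}) ∧
      (X i = ∅ → X (i + 1) = ∅)) :
    X M = ∅ :=
  stmt_0_general hdiam hcover (by simpa only [edist_le_ofReal hr.le] using hstep)
end

section
/- Let S be a measurable space, let κ be a Markov kernel from S to S, let s₀ ∈ S be a point whose singleton {s₀} is measurable, and let q ∈ (0,1] be such that κ(x, {s₀}) ≥ q for every x ∈ S. Then for any two probability measures ν and ν′ on S and every measurable set A, |(ν.bind κ)(A) − (ν′.bind κ)(A)| ≤ (1 − q) · sup_B |ν(B) − ν′(B)|, where the supremum is over measurable sets B. -/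
open MeasureTheory ProbabilityTheory

/-!
If `μ ≤ κ x` for all `x`, then `κ x A - μ A` takes values in `[0, 1 - μ(univ)]`. Subtracting the
constant `μ A` does not change the difference of the integrals of `x ↦ κ x A` against two
probability measures, and by the layer-cake formula a measurable function with values in `[0, c]`
has integrals differing by at most `c` times the total variation distance. A mass of at least `q`
at `s₀` is the case `μ = q • dirac s₀`.
-/

section TotalVariation

variable {S : Type*} [MeasurableSpace S]

/-- The total variation distance between two finite measures, normalized as the largest discrepancy
on a measurable set (half the `L¹` distance in the case of probability measures). It is `0` by
convention when the discrepancies are unbounded, which cannot happen for finite measures. -/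
noncomputable def tvDist (ν ν' : Measure S) : ℝ :=
  ⨆ B : {B : Set S // MeasurableSet B}, |ν.real B.1 - ν'.real B.1|

variable {ν ν' : Measure S} [IsFiniteMeasure ν] [IsFiniteMeasure ν']

lemma abs_measureReal_sub_le_tvDist {B : Set S} (hB : MeasurableSet B) :
    |ν.real B - ν'.real B| ≤ tvDist ν ν' := by
  refine le_ciSup (f := fun B : {B : Set S // MeasurableSet B} => |ν.real B.1 - ν'.real B.1|)
    ⟨max (ν.real Set.univ) (ν'.real Set.univ), ?_⟩ ⟨B, hB⟩
  rintro _ ⟨C, rfl⟩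
  exact abs_sub_le_of_nonneg_of_le
    measureReal_nonneg (le_max_of_le_left (measureReal_mono (Set.subset_univ _)))
    measureReal_nonneg (le_max_of_le_right (measureReal_mono (Set.subset_univ _)))

lemma abs_integral_sub_integral_le_mul_tvDist {f : S → ℝ} (hf : Measurable f) {c : ℝ}
    (hc : 0 ≤ c) (hfc : ∀ x, f x ∈ Set.Icc 0 c) :
    |∫ x, f x ∂ν - ∫ x, f x ∂ν'| ≤ c * tvDist ν ν' := by
  have layercake (μ : Measure S) [IsFiniteMeasure μ] :
      ∫ x, f x ∂μ = ∫ t in Set.Ioc 0 c, μ.real {x | t ≤ f x} :=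
    (Integrable.of_mem_Icc 0 c hf.aemeasurable (.of_forall hfc)).integral_eq_integral_Ioc_meas_le
      (.of_forall fun x => (hfc x).1) (.of_forall fun x => (hfc x).2)
  have integrableOn_tail (μ : Measure S) [IsFiniteMeasure μ] :
      IntegrableOn (fun t => μ.real {x | t ≤ f x}) (Set.Ioc 0 c) := by
    have tail_antitone : Antitone fun t => μ.real {x | t ≤ f x} :=
      fun _ _ hst => measureReal_mono fun _ => hst.trans
    exact tail_antitone.intervalIntegrable.1
  calc |∫ x, f x ∂ν - ∫ x, f x ∂ν'|
      = ‖∫ t in Set.Ioc 0 c, (ν.real {x | t ≤ f x} - ν'.real {x | t ≤ f x})‖ := by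
        rw [layercake ν, layercake ν', integral_sub (integrableOn_tail ν) (integrableOn_tail ν'),
          Real.norm_eq_abs]
    _ ≤ tvDist ν ν' * volume.real (Set.Ioc 0 c) :=
        norm_setIntegral_le_of_norm_le_const measure_Ioc_lt_top fun _ _ =>
          abs_measureReal_sub_le_tvDist (measurableSet_le measurable_const hf)
    _ = c * tvDist ν ν' := by
        rw [Real.volume_real_Ioc_of_le hc, sub_zero, mul_comm]

end TotalVariation

section Minorization

variable {S T : Type*} [MeasurableSpace S] [MeasurableSpace T]

lemma smul_dirac_le_of_le_apply_singleton {μ : Measure T} {t : T} {c : ENNReal}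
    (h : c ≤ μ {t}) : c • Measure.dirac t ≤ μ := by
  refine Measure.le_iff.2 fun A hA => ?_
  by_cases ht : t ∈ A
  · simpa [ht] using h.trans (measure_mono (Set.singleton_subset_iff.2 ht))
  · simp [Measure.dirac_apply' t hA, ht]

lemma measureReal_sub_mem_Icc_of_le {μ ρ : Measure T} [IsFiniteMeasure ρ] (h : μ ≤ ρ)
    {A : Set T} (hA : MeasurableSet A) :
    ρ.real A - μ.real A ∈ Set.Icc 0 (ρ.real Set.univ - μ.real Set.univ) := by
  have : IsFiniteMeasure μ := isFiniteMeasure_of_le ρ h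
  have real_le (B : Set T) : μ.real B ≤ ρ.real B :=
    ENNReal.toReal_mono (measure_ne_top ρ B) (h B)
  refine ⟨sub_nonneg.2 (real_le A), ?_⟩
  linarith [real_le Aᶜ, measureReal_add_measureReal_compl (μ := μ) hA,
    measureReal_add_measureReal_compl (μ := ρ) hA]

lemma measureReal_bind_eq_integral (ν : Measure S) (κ : Kernel S T) [IsFiniteKernel κ]
    {A : Set T} (hA : MeasurableSet A) : (ν.bind κ).real A = ∫ x, (κ x).real A ∂ν := by
  rw [measureReal_def, Measure.bind_apply hA κ.aemeasurable]
  exact (integral_toReal (κ.measurable_coe hA).aemeasurable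
    (.of_forall fun x => measure_lt_top (κ x) A)).symm

theorem stmt_9_general (κ : Kernel S T) [IsMarkovKernel κ] {μ : Measure T} (hμ : ∀ x, μ ≤ κ x)
    (ν ν' : Measure S) [IsProbabilityMeasure ν] [IsProbabilityMeasure ν'] :
    tvDist (ν.bind κ) (ν'.bind κ) ≤ (1 - μ.real Set.univ) * tvDist ν ν' := by
  have residual_mem {A : Set T} (hA : MeasurableSet A) (x : S) :
      (κ x).real A - μ.real A ∈ Set.Icc 0 (1 - μ.real Set.univ) := by
    simpa only [probReal_univ] using measureReal_sub_mem_Icc_of_le (hμ x) hA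
  have residual_mass_nonneg : 0 ≤ 1 - μ.real Set.univ := by
    obtain ⟨x⟩ := nonempty_of_isProbabilityMeasure ν
    exact Set.nonempty_Icc.1 ⟨_, residual_mem .univ x⟩
  refine ciSup_le fun ⟨A, hA⟩ => ?_
  have κA_meas : Measurable fun x => (κ x).real A := (κ.measurable_coe hA).ennreal_toReal
  have bind_eq (ρ : Measure S) [IsProbabilityMeasure ρ] :
      (ρ.bind κ).real A = ∫ x, ((κ x).real A - μ.real A) ∂ρ + μ.real A := by
    have κA_int : Integrable (fun x => (κ x).real A) ρ :=
      .of_mem_Icc 0 1 κA_meas.aemeasurable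
        (.of_forall fun _ => ⟨measureReal_nonneg, measureReal_le_one⟩)
    rw [measureReal_bind_eq_integral ρ κ hA, integral_sub κA_int (integrable_const _),
      integral_const, probReal_univ, one_smul, sub_add_cancel]
  rw [bind_eq ν, bind_eq ν', add_sub_add_right_eq_sub]
  exact abs_integral_sub_integral_le_mul_tvDist (κA_meas.sub_const _) residual_mass_nonneg
    (residual_mem hA)

end Minorization

/-- One-step total-variation contraction under a Doeblin-type minorization:
if a Markov kernel `κ` satisfies `κ(x, {s₀}) ≥ q` for all `x`, then for any two
probability measures `ν, ν'` and any measurable `A`,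
`|(ν.bind κ)(A) − (ν'.bind κ)(A)| ≤ (1 − q) · sup_B |ν(B) − ν'(B)|`. -/
theorem stmt_9 {S : Type*} [MeasurableSpace S] (κ : Kernel S S) [IsMarkovKernel κ]
    (s₀ : S) (hs₀ : MeasurableSet ({s₀} : Set S))
    (q : ℝ) (hq0 : 0 < q) (hq1 : q ≤ 1)
    (hmin : ∀ x : S, ENNReal.ofReal q ≤ κ x {s₀})
    (ν ν' : Measure S) [IsProbabilityMeasure ν] [IsProbabilityMeasure ν']
    (A : Set S) (hA : MeasurableSet A) :
    |((ν.bind κ) A).toReal - ((ν'.bind κ) A).toReal| ≤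
      (1 - q) * ⨆ B : {B : Set S // MeasurableSet B},
        |(ν B.1).toReal - (ν' B.1).toReal| := by
  simpa [tvDist, measureReal_def, hq0.le] using (abs_measureReal_sub_le_tvDist hA).trans
    (stmt_9_general κ (fun x => smul_dirac_le_of_le_apply_singleton (hmin x)) ν ν')
end

section
/- Let S be a measurable space, let κ be a Markov kernel from S to S, let s₀ ∈ S be a point whose singleton {s₀} is measurable, and let q ∈ (0,1] be such that κ(x, {s₀}) ≥ q for every x ∈ S. Then the invariant probability measure μ of κ is unique, and for every probability measure ν on S, every n ∈ ℕ, and every measurable set A, |(ν.bind κⁿ)(A) − μ(A)| ≤ (1 − q)^n, where κⁿ denotes the n-fold composition of the kernel κ with itself; in particular, the distribution of the chain started from any initial distribution converges to μ in total variation, geometrically fast. -/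
open MeasureTheory ProbabilityTheory

/-!
If `φ` minorizes every `κ x`, the kernel splits as `κ = const φ + η`, where the residual `η` has
constant mass `1 - φ univ`. Applied to a probability measure, the first summand forgets its
argument, so after `n` steps
`κ ^ n ∘ₘ ν = ∑ k < n, η ^ k ∘ₘ φ + η ^ n ∘ₘ ν`,
where only the last term, of mass `(1 - φ univ) ^ n`, depends on `ν`. Letting `n → ∞` suggests the
invariant law `∑ k, η ^ k ∘ₘ φ`.
-/

open scoped ENNReal

section Pow

variable {S : Type*} [MeasurableSpace S]

lemma pow_succ_comp (κ : Kernel S S) (ν : Measure S) (n : ℕ) :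
    (κ ^ (n + 1)) ∘ₘ ν = (κ ^ n) ∘ₘ (κ ∘ₘ ν) := by
  rw [pow_succ, Measure.comp_assoc]
  rfl

lemma pow_succ_comp' (κ : Kernel S S) (ν : Measure S) (n : ℕ) :
    (κ ^ (n + 1)) ∘ₘ ν = κ ∘ₘ ((κ ^ n) ∘ₘ ν) := by
  rw [pow_succ', Measure.comp_assoc]
  rfl

lemma pow_zero_comp (κ : Kernel S S) (ν : Measure S) : (κ ^ 0 : Kernel S S) ∘ₘ ν = ν :=
  Measure.id_comp

lemma iterate_comp_eq_pow_comp (κ : Kernel S S) (ν : Measure S) (n : ℕ) :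
    (κ ∘ₘ ·)^[n] ν = (κ ^ n) ∘ₘ ν := by
  induction n with
  | zero => rw [pow_zero_comp, Function.iterate_zero_apply]
  | succ n ih => rw [Function.iterate_succ_apply', ih, pow_succ_comp']

lemma isMarkovKernel_pow (κ : Kernel S S) [IsMarkovKernel κ] (n : ℕ) :
    IsMarkovKernel (κ ^ n) := by
  induction n with
  | zero => exact inferInstanceAs (IsMarkovKernel Kernel.id)
  | succ n _ => exact inferInstanceAs (IsMarkovKernel ((κ ^ n) ∘ₖ κ))

lemma invariant_pow {κ : Kernel S S} {μ : Measure S} (hμ : κ.Invariant μ) (n : ℕ) :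
    (κ ^ n).Invariant μ := by
  induction n with
  | zero => exact pow_zero_comp κ μ
  | succ n ih => rw [Kernel.Invariant, pow_succ_comp, hμ.def, ih.def]

lemma pow_comp_univ {η : Kernel S S} {r : ℝ≥0∞} (hη : ∀ x, η x Set.univ = r)
    (ν : Measure S) (n : ℕ) :
    ((η ^ n) ∘ₘ ν) Set.univ = r ^ n * ν Set.univ := by
  induction n with
  | zero => rw [pow_zero_comp, pow_zero, one_mul]
  | succ n ih =>
    rw [pow_succ_comp', Measure.bind_apply .univ η.aemeasurable, lintegral_congr hη,
      lintegral_const, ih, pow_succ', mul_assoc]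

end Pow

section Potential

variable {S : Type*} [MeasurableSpace S]

/-- The potential `∑ₙ ηⁿ φ` of a measure `φ` under a kernel `η`: for sub-Markovian `η`, the expected
occupation measure of the chain started from `φ` and killed according to the missing mass of `η`. -/
noncomputable def potential (η : Kernel S S) (φ : Measure S) : Measure S :=
  Measure.sum fun n : ℕ => (η ^ n : Kernel S S) ∘ₘ φ

lemma potential_univ {η : Kernel S S} {r : ℝ≥0∞} (hη : ∀ x, η x Set.univ = r) (φ : Measure S) :
    potential η φ Set.univ = (1 - r)⁻¹ * φ Set.univ := by
  simp only [potential, Measure.sum_apply _ MeasurableSet.univ, pow_comp_univ hη,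
    ENNReal.tsum_mul_right, ENNReal.tsum_geometric]

lemma add_comp_potential (η : Kernel S S) (φ : Measure S) :
    φ + η ∘ₘ potential η φ = potential η φ := by
  have hshift : η ∘ₘ potential η φ = Measure.sum fun n : ℕ => (η ^ (n + 1) : Kernel S S) ∘ₘ φ := by
    simp only [pow_succ_comp', potential, Measure.bind_sum _ _ η.aemeasurable]
  ext A hA
  rw [hshift, potential, Measure.add_apply, Measure.sum_apply _ hA, Measure.sum_apply _ hA,
    tsum_eq_zero_add' (f := fun n : ℕ => ((η ^ n : Kernel S S) ∘ₘ φ) A) ENNReal.summable,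
    pow_zero_comp]

end Potential

section Minorization

lemma smul_dirac_le_of_le_measure_singleton {α : Type*} [MeasurableSpace α] {μ : Measure α} {a : α}
    {c : ℝ≥0∞} (hc : c ≤ μ {a}) : c • Measure.dirac a ≤ μ :=
  calc
    c • Measure.dirac a ≤ μ {a} • Measure.dirac a := by gcongr
    _ = μ.restrict {a} := (Measure.restrict_singleton _ _).symm
    _ ≤ μ := Measure.restrict_le_self

lemma exists_kernel_eq_add_of_le {α β : Type*} [MeasurableSpace α] [MeasurableSpace β]
    {κ' κ : Kernel α β} [IsFiniteKernel κ'] (hle : κ' ≤ κ) : ∃ η : Kernel α β, κ = κ' + η := by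
  have hmeas : Measurable fun x => κ x - κ' x := by
    refine Measure.measurable_of_measurable_coe _ fun A hA => ?_
    simp only [Measure.sub_apply hA (hle _)]
    exact (κ.measurable_coe hA).sub (κ'.measurable_coe hA)
  refine ⟨⟨_, hmeas⟩, Kernel.ext fun x => ?_⟩
  exact (Measure.sub_add_cancel_of_le (hle x)).symm.trans (add_comm _ _)

variable {S : Type*} [MeasurableSpace S] {κ η : Kernel S S} {φ : Measure S}

lemma residual_apply_univ [IsMarkovKernel κ] [IsFiniteMeasure φ]
    (hκ : κ = Kernel.const S φ + η) (x : S) : η x Set.univ = 1 - φ Set.univ := by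
  have hmass : φ Set.univ + η x Set.univ = 1 := by
    rw [← measure_univ (μ := κ x), hκ]
    rfl
  rw [← hmass, ENNReal.add_sub_cancel_left (measure_ne_top φ _)]

lemma comp_eq_add_residual_comp (hκ : κ = Kernel.const S φ + η) (ν : Measure S)
    [IsProbabilityMeasure ν] : κ ∘ₘ ν = φ + η ∘ₘ ν := by
  rw [hκ, Measure.add_comp, Measure.const_comp, measure_univ, one_smul]

lemma pow_comp_eq_sum_add [IsMarkovKernel κ] (hκ : κ = Kernel.const S φ + η) (ν : Measure S)
    [IsProbabilityMeasure ν] (n : ℕ) :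
    (κ ^ n) ∘ₘ ν = ∑ k ∈ Finset.range n, (η ^ k) ∘ₘ φ + (η ^ n) ∘ₘ ν := by
  induction n generalizing ν with
  | zero => rw [pow_zero_comp, pow_zero_comp, Finset.sum_range_zero, zero_add]
  | succ n ih =>
    rw [pow_succ_comp, ih (κ ∘ₘ ν), comp_eq_add_residual_comp hκ, Measure.comp_add, ← add_assoc,
      ← Finset.sum_range_succ, pow_succ_comp]

lemma pow_residual_comp_real_univ [IsMarkovKernel κ] [IsFiniteMeasure φ]
    (hκ : κ = Kernel.const S φ + η) (hφ : φ Set.univ ≤ 1) (ν : Measure S) [IsProbabilityMeasure ν]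
    (n : ℕ) : ((η ^ n) ∘ₘ ν).real Set.univ = (1 - φ.real Set.univ) ^ n := by
  rw [measureReal_def, pow_comp_univ (residual_apply_univ hκ), measure_univ (μ := ν), mul_one,
    ENNReal.toReal_pow, ENNReal.toReal_sub_of_le hφ ENNReal.one_ne_top, ENNReal.toReal_one,
    measureReal_def]

lemma abs_pow_comp_real_sub_le [IsMarkovKernel κ] [IsFiniteMeasure φ]
    (hκ : κ = Kernel.const S φ + η) (hφ : φ Set.univ ≤ 1) (ν ν' : Measure S)
    [IsProbabilityMeasure ν] [IsProbabilityMeasure ν'] (n : ℕ) (A : Set S) :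
    |((κ ^ n) ∘ₘ ν).real A - ((κ ^ n) ∘ₘ ν').real A| ≤ (1 - φ.real Set.univ) ^ n := by
  have := isMarkovKernel_pow κ n
  set σ : Measure S := ∑ k ∈ Finset.range n, (η ^ k : Kernel S S) ∘ₘ φ
  have hsplit (m : Measure S) [IsProbabilityMeasure m] :
      (κ ^ n) ∘ₘ m = σ + (η ^ n : Kernel S S) ∘ₘ m :=
    pow_comp_eq_sum_add hκ m n
  have : IsFiniteMeasure σ :=
    isFiniteMeasure_of_le ((κ ^ n : Kernel S S) ∘ₘ ν) (hsplit ν ▸ Measure.le_add_right le_rfl)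
  have hfinite (m : Measure S) [IsProbabilityMeasure m] :
      IsFiniteMeasure ((η ^ n : Kernel S S) ∘ₘ m) :=
    isFiniteMeasure_of_le ((κ ^ n : Kernel S S) ∘ₘ m) (hsplit m ▸ Measure.le_add_left le_rfl)
  have hbound (m : Measure S) [IsProbabilityMeasure m] :
      ((η ^ n) ∘ₘ m).real A ≤ (1 - φ.real Set.univ) ^ n :=
    (measureReal_mono A.subset_univ).trans_eq (pow_residual_comp_real_univ hκ hφ m n)
  rw [hsplit ν, hsplit ν', measureReal_add_apply, measureReal_add_apply, add_sub_add_left_eq_sub]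
  exact abs_sub_le_of_nonneg_of_le measureReal_nonneg (hbound ν) measureReal_nonneg (hbound ν')

lemma isProbabilityMeasure_potential [IsMarkovKernel κ] [IsFiniteMeasure φ]
    (hκ : κ = Kernel.const S φ + η) (hφ : φ Set.univ ≤ 1) (hφ₀ : φ ≠ 0) :
    IsProbabilityMeasure (potential η φ) :=
  ⟨by rw [potential_univ (residual_apply_univ hκ), ENNReal.sub_sub_cancel ENNReal.one_ne_top hφ,
    ENNReal.inv_mul_cancel (Measure.measure_univ_ne_zero.2 hφ₀) (measure_ne_top φ _)]⟩

lemma invariant_potential (hκ : κ = Kernel.const S φ + η) [IsProbabilityMeasure (potential η φ)] :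
    κ.Invariant (potential η φ) := by
  rw [Kernel.Invariant, comp_eq_add_residual_comp hκ, add_comp_potential]

end Minorization

lemma measure_eq_of_abs_real_sub_le_of_tendsto_zero {α : Type*} [MeasurableSpace α] {μ ν : Measure α}
    [IsFiniteMeasure μ] [IsFiniteMeasure ν] {u : ℕ → ℝ}
    (hu : Filter.Tendsto u Filter.atTop (nhds 0))
    (h : ∀ n A, MeasurableSet A → |μ.real A - ν.real A| ≤ u n) : μ = ν := by
  ext A hA
  rw [← measureReal_eq_measureReal_iff, ← sub_eq_zero, ← abs_nonpos_iff]
  exact ge_of_tendsto' hu fun n => h n A hA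

theorem stmt_11_general {S : Type*} [MeasurableSpace S] (κ : Kernel S S) [IsMarkovKernel κ]
    (φ : Measure S) (hφ₀ : φ ≠ 0) (hmin : ∀ x, φ ≤ κ x) :
    ∃ μ : Measure S, (IsProbabilityMeasure μ ∧ κ.Invariant μ) ∧
      (∀ μ' : Measure S, IsProbabilityMeasure μ' → κ.Invariant μ' → μ' = μ) ∧
      ∀ ν : Measure S, IsProbabilityMeasure ν → ∀ (n : ℕ) (A : Set S),
        |((κ ^ n) ∘ₘ ν).real A - μ.real A| ≤ (1 - φ.real Set.univ) ^ n := by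
  have : NeZero φ := ⟨hφ₀⟩
  obtain ⟨x⟩ : Nonempty S := φ.nonempty_of_neZero
  have : IsFiniteMeasure φ := isFiniteMeasure_of_le (κ x) (hmin x)
  have hφ : φ Set.univ ≤ 1 := (hmin x Set.univ).trans_eq measure_univ
  obtain ⟨η, hκ⟩ := exists_kernel_eq_add_of_le (κ' := Kernel.const S φ) (κ := κ) hmin
  have hprob := isProbabilityMeasure_potential hκ hφ hφ₀
  have hinv := invariant_potential hκ
  have hconv (ν : Measure S) (_ : IsProbabilityMeasure ν) (n : ℕ) (A : Set S) :
      |((κ ^ n) ∘ₘ ν).real A - (potential η φ).real A| ≤ (1 - φ.real Set.univ) ^ n := by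
    simpa only [(invariant_pow hinv n).def] using
      abs_pow_comp_real_sub_le hκ hφ ν (potential η φ) n A
  have hrate : Filter.Tendsto (fun n : ℕ => (1 - φ.real Set.univ) ^ n) Filter.atTop (nhds 0) :=
    tendsto_pow_atTop_nhds_zero_of_lt_one
      (sub_nonneg.2 (ENNReal.toReal_le_of_le_ofReal zero_le_one (by simpa using hφ)))
      (sub_lt_self 1 measureReal_univ_pos)
  refine ⟨potential η φ, ⟨hprob, hinv⟩, fun μ' hμ' hinv' => ?_, hconv⟩
  refine measure_eq_of_abs_real_sub_le_of_tendsto_zero hrate fun n A _ => ?_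
  simpa only [(invariant_pow hinv' n).def] using hconv μ' hμ' n A

/-- Uniqueness of the invariant probability measure and geometric convergence in
total variation under a Doeblin-type minorization `κ(x, {s₀}) ≥ q > 0`: the
distribution after `n` steps from any initial probability measure `ν` (i.e.
`ν.bind κⁿ`, the `n`-fold iterate of one-step evolution) is within `(1 − q)^n`
of the invariant measure `μ` on every measurable set. -/
theorem stmt_11 {S : Type*} [MeasurableSpace S] (κ : Kernel S S) [IsMarkovKernel κ]
    (s₀ : S) (hs₀ : MeasurableSet ({s₀} : Set S))
    (q : ℝ) (hq0 : 0 < q) (hq1 : q ≤ 1)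
    (hmin : ∀ x : S, ENNReal.ofReal q ≤ κ x {s₀}) :
    ∃ μ : Measure S, (IsProbabilityMeasure μ ∧ μ.bind κ = μ) ∧
      (∀ μ' : Measure S, IsProbabilityMeasure μ' → μ'.bind κ = μ' → μ' = μ) ∧
      ∀ ν : Measure S, IsProbabilityMeasure ν → ∀ n : ℕ, ∀ A : Set S,
        MeasurableSet A →
          |(((fun m : Measure S => m.bind κ)^[n] ν) A).toReal - (μ A).toReal| ≤
            (1 - q) ^ n := by
  obtain ⟨μ, hμ, huniq, hconv⟩ := stmt_11_general κ (ENNReal.ofReal q • Measure.dirac s₀)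
    (by simpa using hq0) fun x => smul_dirac_le_of_le_measure_singleton (hmin x)
  exact ⟨μ, hμ, huniq, fun ν hν n A _ => by
    simpa [iterate_comp_eq_pow_comp, measureReal_def, hq0.le] using hconv ν hν n A⟩
end
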